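/- arXiv:1905.09641 — 2 statements merged into one kernel-verified Lean document; each statement's English description precedes it below -/
import Mathlib

section
/- For b ≥ 2, a permutation σ of {0,...,b-1}, and a ∈ {1,...,b-1}, let σ'(x) = σ(x) + a mod b. Then for all N ≥ 1, the extreme discrepancy of the first N points of the permuted van der Corput sequence satisfies D_N(S_b^σ) = D_N(S_b^{σ'}). -/
open scoped Classical

/-- The permuted `b`-adic radical inverse function of Faure. -/
noncomputable def Sperm (b : ℕ) (σ : ℕ → ℕ) (n : ℕ) : ℝ :=
  ∑' j : ℕ, (σ (n / b ^ j % b) : ℝ) / b ^ (j + 1)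

/-- Extreme discrepancy of the first `N` points of a sequence in `[0,1)`. -/
noncomputable def disc (N : ℕ) (x : ℕ → ℝ) : ℝ :=
  ⨆ I : {p : ℝ × ℝ // 0 ≤ p.1 ∧ p.1 < p.2 ∧ p.2 ≤ 1},
    |(((Finset.range N).filter fun i => I.1.1 ≤ x i ∧ x i < I.1.2).card : ℝ) / N
      - (I.1.2 - I.1.1)|

/-!
Cut `[0, 1]` at the multiples of `b⁻ⁿ`, where `N < bⁿ`. At the cut points the local discrepancy
`#{i < N | x i < t} - N t` takes a finite set of values, whose diameter tends to `N * D_N` as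
`n → ∞`. By the self-similarity of the sequence this set is a Minkowski sum with one summand for
each digit of `N`: the values at `0, …, b - 1` of one of Faure's `φ`-functions, which describe the
discrepancy at a single digit level. Replacing `σ` by `σ + a mod b` permutes the arguments of these
functions cyclically and adds constants to them, so each summand is merely translated and the
diameter does not change.
-/

open Set Filter Topology
open scoped Pointwise

theorem count_congr_of_lt {p q : ℕ → Prop} [DecidablePred p] [DecidablePred q] {n : ℕ}
    (h : ∀ k < n, p k ↔ q k) : Nat.count p n = Nat.count q n :=
  (Nat.count_mono_left fun k hk => (h k hk).1).antisymm
    (Nat.count_mono_left fun k hk => (h k hk).2)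

theorem count_lt_of_bijOn {f : ℕ → ℕ} {B l : ℕ} (hf : BijOn f (Iio B) (Iio B)) (hl : l ≤ B) :
    Nat.count (f · < l) B = l := by
  rw [Nat.count_eq_card_filter_range, ← Finset.card_range l]
  refine Finset.card_nbij f (fun i hi => ?_) (fun i hi j hj => ?_) (fun y hy => ?_)
  · simp_all
  · simp only [Finset.coe_filter, Finset.mem_range, mem_ofPred_eq] at hi hj
    exact hf.injOn hi.1 hj.1
  · have hyl : y < l := by simpa using hy
    obtain ⟨i, hi, rfl⟩ := hf.surjOn (mem_Iio.2 (hyl.trans_le hl))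
    exact ⟨i, by simpa using ⟨hi, hyl⟩, rfl⟩

theorem card_filter_Ico_eq_count_sub_count (x : ℕ → ℝ) (N : ℕ) {α β : ℝ} (h : α ≤ β) :
    (((Finset.range N).filter fun i => α ≤ x i ∧ x i < β).card : ℝ)
      = Nat.count (x · < β) N - Nat.count (x · < α) N := by
  rw [← Nat.count_eq_card_filter_range]
  induction N with
  | zero => simp
  | succ N ih =>
    simp only [Nat.count_succ, Nat.cast_add, ih]
    have hstep : ((if α ≤ x N ∧ x N < β then 1 else 0 : ℕ) : ℝ)
        = (if x N < β then 1 else 0 : ℕ) - (if x N < α then 1 else 0 : ℕ) := by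
      split_ifs <;> grind
    linarith

theorem diam_le_diam_add_of_forall_exists_dist_le {X : Type*} [PseudoMetricSpace X] {s t : Set X}
    {δ : ℝ} (hδ : 0 ≤ δ) (ht : Bornology.IsBounded t) (h : ∀ x ∈ s, ∃ y ∈ t, dist x y ≤ δ) :
    Metric.diam s ≤ Metric.diam t + 2 * δ := by
  have hst : s ⊆ Metric.cthickening δ t := fun x hx =>
    let ⟨y, hy, hxy⟩ := h x hx
    Metric.mem_cthickening_of_dist_le x y δ t hy hxy
  exact (Metric.diam_mono hst ht.cthickening).trans (Metric.diam_cthickening_le t hδ)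

/-- The local discrepancy of the first `N` points of `x` at `t`, scaled by `N`. -/
noncomputable def localDisc (x : ℕ → ℝ) (N : ℕ) (t : ℝ) : ℝ :=
  Nat.count (x · < t) N - N * t

theorem isBounded_image_localDisc (x : ℕ → ℝ) (N : ℕ) :
    Bornology.IsBounded (localDisc x N '' Icc 0 1) := by
  refine (Metric.isBounded_Icc (-N : ℝ) N).subset ?_
  rintro _ ⟨t, ⟨ht0, ht1⟩, rfl⟩
  have hcount : (Nat.count (x · < t) N : ℝ) ≤ N := mod_cast Nat.count_le _
  have hNt : N * t ≤ N := mul_le_of_le_one_right N.cast_nonneg ht1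
  have hNt' : 0 ≤ N * t := by positivity
  constructor <;> unfold localDisc <;> linarith

theorem abs_card_div_sub_eq_dist_localDisc_div (x : ℕ → ℝ) {N : ℕ} (hN : 0 < N) {α β : ℝ}
    (h : α ≤ β) :
    |(((Finset.range N).filter fun i => α ≤ x i ∧ x i < β).card : ℝ) / N - (β - α)|
      = dist (localDisc x N β) (localDisc x N α) / N := by
  have hN' : (0 : ℝ) < N := mod_cast hN
  rw [card_filter_Ico_eq_count_sub_count x N h, Real.dist_eq, ← abs_of_pos hN', ← abs_div,
    abs_of_pos hN', localDisc, localDisc]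
  congr 1
  field_simp
  ring

theorem mul_disc_eq_diam (x : ℕ → ℝ) {N : ℕ} (hN : 0 < N) :
    N * disc N x = Metric.diam (localDisc x N '' Icc 0 1) := by
  have hN' : (0 : ℝ) < N := mod_cast hN
  have hle : ∀ I : {p : ℝ × ℝ // 0 ≤ p.1 ∧ p.1 < p.2 ∧ p.2 ≤ 1},
      |(((Finset.range N).filter fun i => I.1.1 ≤ x i ∧ x i < I.1.2).card : ℝ) / N
        - (I.1.2 - I.1.1)| ≤ Metric.diam (localDisc x N '' Icc 0 1) / N := by
    rintro ⟨⟨α, β⟩, hα, hαβ, hβ⟩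
    rw [abs_card_div_sub_eq_dist_localDisc_div x hN hαβ.le]
    gcongr
    exact Metric.dist_le_diam_of_mem (isBounded_image_localDisc x N)
      (mem_image_of_mem _ ⟨hα.trans hαβ.le, hβ⟩) (mem_image_of_mem _ ⟨hα, hαβ.le.trans hβ⟩)
  have : Nonempty {p : ℝ × ℝ // 0 ≤ p.1 ∧ p.1 < p.2 ∧ p.2 ≤ 1} := ⟨⟨(0, 1), by norm_num⟩⟩
  refine le_antisymm ((le_div_iff₀' hN').1 (ciSup_le hle)) ?_
  have hdisc : 0 ≤ N * disc N x :=
    mul_nonneg hN'.le (Real.iSup_nonneg fun _ => abs_nonneg _)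
  refine Metric.diam_le_of_forall_dist_le hdisc ?_
  rintro _ ⟨β, hβ, rfl⟩ _ ⟨α, hα, rfl⟩
  wlog hαβ : α < β generalizing α β
  · rcases (not_lt.1 hαβ).eq_or_lt with rfl | hβα
    · simpa using hdisc
    · rw [dist_comm]
      exact this α hα β hβ hβα
  rw [← div_le_iff₀' hN', ← abs_card_div_sub_eq_dist_localDisc_div x hN hαβ.le]
  exact le_ciSup (f := fun I : {p : ℝ × ℝ // 0 ≤ p.1 ∧ p.1 < p.2 ∧ p.2 ≤ 1} => _)
    ⟨_, forall_mem_range.2 hle⟩ ⟨(α, β), hα.1, hαβ, hβ.2⟩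

section Grid

/-- The local discrepancy at `l / B` of the first `N` of the points `Y m / B`, scaled by `N`. -/
noncomputable def gridDisc (Y : ℕ → ℕ) (B N l : ℕ) : ℝ :=
  Nat.count (Y · < l) N - N * l / B

variable {Y : ℕ → ℕ} {B N : ℕ}

@[simp]
theorem gridDisc_zero_right (Y : ℕ → ℕ) (B N : ℕ) : gridDisc Y B N 0 = 0 := by
  simp [gridDisc]

@[simp]
theorem gridDisc_zero_points (Y : ℕ → ℕ) (B l : ℕ) : gridDisc Y B 0 l = 0 := by
  simp [gridDisc]

theorem gridDisc_succ (Y : ℕ → ℕ) (B N l : ℕ) :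
    gridDisc Y B (N + 1) l = gridDisc Y B N l + ((if Y N < l then 1 else 0) - l / B) := by
  simp only [gridDisc, Nat.count_succ]
  push_cast
  ring

theorem gridDisc_self (hB : 0 < B) (hY : ∀ m < N, Y m < B) : gridDisc Y B N B = 0 := by
  have hcount : Nat.count (Y · < B) N = N := Nat.count_iff_forall.2 hY
  have hB' : (B : ℝ) ≠ 0 := by positivity
  simp [gridDisc, hcount, hB']

theorem gridDisc_eq_zero_of_bijOn (hY : BijOn Y (Iio B) (Iio B)) {l : ℕ} (hl : l ≤ B) :
    gridDisc Y B B l = 0 := by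
  rcases B.eq_zero_or_pos with rfl | hB
  · simp
  · have hB' : (B : ℝ) ≠ 0 := by positivity
    simp [gridDisc, count_lt_of_bijOn hY hl, hB']

theorem isBounded_image_gridDisc (Y : ℕ → ℕ) (B N : ℕ) :
    Bornology.IsBounded (gridDisc Y B N '' Iio B) :=
  ((finite_Iio B).image _).isBounded

theorem mem_image_Iio_of_le {E : Type*} {f : ℕ → E} (hf : f B = f 0) (hB : 0 < B) {l : ℕ}
    (hl : l ≤ B) : f l ∈ f '' Iio B := by
  rcases hl.lt_or_eq with h | rfl
  · exact mem_image_of_mem f h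
  · exact ⟨0, hB, hf.symm⟩

theorem image_add_one_Iio {E : Type*} {f : ℕ → E} (hf : f B = f 0) :
    (fun μ => f (μ + 1)) '' Iio B = f '' Iio B := by
  ext y
  constructor
  · rintro ⟨μ, hμ, rfl⟩
    exact mem_image_Iio_of_le hf (Nat.zero_lt_of_lt hμ) hμ
  · rintro ⟨ν, hν, rfl⟩
    have hν : ν < B := hν
    rcases ν with _ | ν
    · exact ⟨B - 1, Nat.sub_lt hν one_pos, (congrArg f (Nat.sub_add_cancel hν)).trans hf⟩
    · exact ⟨ν, (Nat.lt_succ_self ν).trans hν, rfl⟩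

variable {x : ℕ → ℝ} {τ : ℝ}

theorem localDisc_eq_gridDisc_ceil (hB : 0 < B) (hx : ∀ m < N, x m = (Y m + τ) / B) (t : ℝ) :
    localDisc x N t
      = gridDisc Y B N ⌈t * B - τ⌉₊ + N / B * (⌈t * B - τ⌉₊ - t * B) := by
  have hB' : (0 : ℝ) < B := mod_cast hB
  have hcount : Nat.count (x · < t) N = Nat.count (Y · < ⌈t * B - τ⌉₊) N :=
    count_congr_of_lt fun m hm => by
      rw [hx m hm, div_lt_iff₀ hB', Nat.lt_ceil, lt_sub_iff_add_lt]
  rw [localDisc, gridDisc, hcount]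
  field_simp
  ring

theorem dist_localDisc_gridDisc_ceil_le (hB : 0 < B) (hτ : τ ∈ Icc 0 1)
    (hx : ∀ m < N, x m = (Y m + τ) / B) {t : ℝ} (ht : 0 ≤ t) :
    dist (localDisc x N t) (gridDisc Y B N ⌈t * B - τ⌉₊) ≤ N / B := by
  have hround : |(⌈t * B - τ⌉₊ : ℝ) - t * B| ≤ 1 := by
    have htB : 0 ≤ t * B := by positivity
    have hlower := Nat.le_ceil (t * B - τ)
    have hupper : (⌈t * B - τ⌉₊ : ℝ) ≤ t * B + 1 := by
      rcases le_total 0 (t * B - τ) with h | h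
      · linarith [Nat.ceil_lt_add_one h, hτ.1]
      · rw [Nat.ceil_eq_zero.2 h]
        push_cast
        linarith
    rw [abs_le]
    constructor <;> linarith [hτ.2]
  rw [localDisc_eq_gridDisc_ceil hB hx, Real.dist_eq, add_sub_cancel_left, abs_mul,
    abs_of_nonneg (by positivity : (0 : ℝ) ≤ N / B)]
  exact mul_le_of_le_one_right (by positivity) hround

theorem dist_mul_disc_diam_gridDisc_le (hB : 0 < B) (hN : 0 < N) (hY : ∀ m < N, Y m < B)
    (hτ : τ ∈ Icc 0 1) (hx : ∀ m < N, x m = (Y m + τ) / B) :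
    dist (Metric.diam (gridDisc Y B N '' Iio B)) (N * disc N x) ≤ 2 * (N / B) := by
  have hB' : (0 : ℝ) < B := mod_cast hB
  have hδ : (0 : ℝ) ≤ N / B := by positivity
  have hperiod : gridDisc Y B N B = gridDisc Y B N 0 := by
    rw [gridDisc_self hB hY, gridDisc_zero_right]
  rw [mul_disc_eq_diam x hN, Real.dist_eq, abs_sub_le_iff, sub_le_iff_le_add', sub_le_iff_le_add']
  constructor
  · refine diam_le_diam_add_of_forall_exists_dist_le hδ (isBounded_image_localDisc x N) ?_
    rintro _ ⟨u, hu, rfl⟩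
    have hu' : (u : ℝ) + 1 ≤ B := mod_cast hu
    have ht0 : 0 ≤ (u + τ) / B := div_nonneg (add_nonneg u.cast_nonneg hτ.1) hB'.le
    have ht1 : (u + τ) / B ≤ 1 := (div_le_one hB').2 (by linarith [hτ.2])
    refine ⟨_, mem_image_of_mem _ ⟨ht0, ht1⟩, ?_⟩
    have hceil : ⌈(u + τ) / B * B - τ⌉₊ = u := by
      rw [div_mul_cancel₀ _ hB'.ne', add_sub_cancel_right, Nat.ceil_natCast]
    have hdist := dist_localDisc_gridDisc_ceil_le hB hτ hx ht0
    rwa [hceil, dist_comm] at hdist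
  · refine diam_le_diam_add_of_forall_exists_dist_le hδ (isBounded_image_gridDisc Y B N) ?_
    rintro _ ⟨t, ⟨ht0, ht1⟩, rfl⟩
    have hceil : ⌈t * B - τ⌉₊ ≤ B := Nat.ceil_le.2 <| by
      linarith [mul_le_of_le_one_left hB'.le ht1, hτ.1]
    exact ⟨_, mem_image_Iio_of_le hperiod hB hceil, dist_localDisc_gridDisc_ceil_le hB hτ hx ht0⟩

end Grid

section RadicalInverse

/-- The permuted radical inverse truncated to `n` digits and scaled by `b ^ n`, i.e. the integer
whose base-`b` digits, most significant first, are `σ (a₀ m), …, σ (aₙ₋₁ m)`. -/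
def radInv (b : ℕ) (σ : ℕ → ℕ) : ℕ → ℕ → ℕ
  | 0, _ => 0
  | n + 1, m => b * radInv b σ n m + σ (m / b ^ n % b)

variable {b : ℕ} {σ : ℕ → ℕ}

theorem radInv_lt (hb : 0 < b) (hσ : MapsTo σ (Iio b) (Iio b)) (n m : ℕ) :
    radInv b σ n m < b ^ n := by
  induction n with
  | zero => simp [radInv]
  | succ n ih =>
    rw [radInv, pow_succ]
    exact Nat.mul_add_lt_mul_of_lt_of_lt ih (hσ (Nat.mod_lt (m / b ^ n) hb))

theorem radInv_mod_pow (b : ℕ) (σ : ℕ → ℕ) {k n : ℕ} (hkn : k ≤ n) (m : ℕ) :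
    radInv b σ k (m % b ^ n) = radInv b σ k m := by
  induction k with
  | zero => rfl
  | succ k ih =>
    obtain ⟨d, rfl⟩ := Nat.exists_eq_add_of_le hkn
    rw [radInv, radInv, ih (by omega), add_assoc, pow_add, Nat.mod_mul_right_div_self,
      Nat.mod_mod_of_dvd _ (dvd_pow_self b (by omega))]

theorem radInv_succ_mul_add {n q r : ℕ} (hq : q < b) (hr : r < b ^ n) :
    radInv b σ (n + 1) (b ^ n * q + r) = b * radInv b σ n r + σ q := by
  have hlow : radInv b σ n (b ^ n * q + r) = radInv b σ n r := by
    rw [← radInv_mod_pow b σ le_rfl, Nat.mul_add_mod, radInv_mod_pow b σ le_rfl]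
  rw [radInv, hlow, Nat.mul_add_div (Nat.zero_lt_of_lt hr), Nat.div_eq_of_lt hr, add_zero,
    Nat.mod_eq_of_lt hq]

theorem radInv_bijOn (hb : 0 < b) (hσ : BijOn σ (Iio b) (Iio b)) (n : ℕ) :
    BijOn (radInv b σ n) (Iio (b ^ n)) (Iio (b ^ n)) := by
  rw [← (finite_Iio _).injOn_iff_bijOn_of_mapsTo fun m _ => radInv_lt hb hσ.mapsTo n m]
  induction n with
  | zero => simp [InjOn]
  | succ n ih =>
    intro m hm m' hm' h
    have hpow : 0 < b ^ n := by positivity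
    have hdigit : ∀ {k}, k ∈ Iio (b ^ (n + 1)) → k / b ^ n < b := fun hk =>
      Nat.div_lt_of_lt_mul (by rwa [← pow_succ])
    rw [← Nat.div_add_mod m (b ^ n), ← Nat.div_add_mod m' (b ^ n)] at h ⊢
    rw [radInv_succ_mul_add (hdigit hm) (Nat.mod_lt _ hpow),
      radInv_succ_mul_add (hdigit hm') (Nat.mod_lt _ hpow)] at h
    have hσm := hσ.mapsTo (hdigit hm)
    have hσm' := hσ.mapsTo (hdigit hm')
    have htop : σ (m / b ^ n) = σ (m' / b ^ n) := by
      simpa [Nat.mul_add_mod, Nat.mod_eq_of_lt hσm, Nat.mod_eq_of_lt hσm'] using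
        congrArg (· % b) h
    have hlow : radInv b σ n (m % b ^ n) = radInv b σ n (m' % b ^ n) :=
      Nat.eq_of_mul_eq_mul_left hb (by omega)
    rw [hσ.injOn (hdigit hm) (hdigit hm') htop,
      ih (Nat.mod_lt m hpow) (Nat.mod_lt m' hpow) hlow]

/-- The permuted digits of `m`, least significant first, so that `Real.ofDigits` of them is the
permuted radical inverse of `m`. -/
def permDigits (hb : 0 < b) (hσ : MapsTo σ (Iio b) (Iio b)) (m j : ℕ) : Fin b :=
  ⟨σ (m / b ^ j % b), hσ (Nat.mod_lt _ hb)⟩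

theorem Sperm_eq_ofDigits (hb : 0 < b) (hσ : MapsTo σ (Iio b) (Iio b)) (m : ℕ) :
    Sperm b σ m = Real.ofDigits (permDigits hb hσ m) := by
  simp [Sperm, Real.ofDigits, Real.ofDigitsTerm, permDigits, div_eq_mul_inv]

theorem sum_ofDigitsTerm_permDigits (hb : 0 < b) (hσ : MapsTo σ (Iio b) (Iio b)) (n m : ℕ) :
    ∑ j ∈ Finset.range n, Real.ofDigitsTerm (permDigits hb hσ m) j
      = (radInv b σ n m : ℝ) / (b ^ n : ℕ) := by
  induction n with
  | zero => simp [radInv]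
  | succ n ih =>
    rw [Finset.sum_range_succ, ih, radInv, Real.ofDigitsTerm, permDigits]
    push_cast
    field_simp
    ring

theorem Sperm_eq_radInv_add_div (hb : 0 < b) (hσ : MapsTo σ (Iio b) (Iio b)) {n m : ℕ}
    (hm : m < b ^ n) :
    Sperm b σ m = (radInv b σ n m + Sperm b σ 0) / (b ^ n : ℕ) := by
  have htail : (fun j => permDigits hb hσ m (j + n)) = permDigits hb hσ 0 := by
    funext j
    have hdiv : m / b ^ (j + n) = 0 :=
      Nat.div_eq_of_lt (hm.trans_le (Nat.pow_le_pow_right hb (Nat.le_add_left n j)))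
    simp [permDigits, hdiv]
  rw [Sperm_eq_ofDigits hb hσ, Sperm_eq_ofDigits hb hσ, Real.ofDigits_eq_sum_add_ofDigits _ n,
    sum_ofDigitsTerm_permDigits, htail, add_div, inv_mul_eq_div, Nat.cast_pow]

theorem tendsto_diam_gridDisc_radInv (hb : 2 ≤ b) (hσ : MapsTo σ (Iio b) (Iio b)) {N : ℕ}
    (hN : 0 < N) :
    Tendsto (fun n => Metric.diam (gridDisc (radInv b σ n) (b ^ n) N '' Iio (b ^ n))) atTop
      (𝓝 (N * disc N (Sperm b σ))) := by
  have hb0 : 0 < b := by omega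
  have hτ : Sperm b σ 0 ∈ Icc (0 : ℝ) 1 := by
    rw [Sperm_eq_ofDigits hb0 hσ]
    exact ⟨Real.ofDigits_nonneg _, Real.ofDigits_le_one _⟩
  have hpow : Tendsto (fun n => ((b ^ n : ℕ) : ℝ)) atTop atTop :=
    tendsto_natCast_atTop_atTop.comp (tendsto_pow_atTop_atTop_of_one_lt hb)
  have hsmall : Tendsto (fun n => 2 * ((N : ℝ) / (b ^ n : ℕ))) atTop (𝓝 0) := by
    simpa using (hpow.const_div_atTop (N : ℝ)).const_mul 2
  rw [tendsto_iff_dist_tendsto_zero]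
  refine squeeze_zero' (.of_forall fun _ => dist_nonneg) ?_ hsmall
  filter_upwards [eventually_ge_atTop N] with n hn
  have hNb : N ≤ b ^ n := hn.trans (Nat.lt_pow_self hb).le
  exact dist_mul_disc_diam_gridDisc_le (by positivity) hN (fun m _ => radInv_lt hb0 hσ n m) hτ
    fun m hm => Sperm_eq_radInv_add_div hb0 hσ (hm.trans_le hNb)

end RadicalInverse

section SelfSimilarity

variable {b : ℕ} {σ : ℕ → ℕ}

theorem mul_add_lt_mul_add_iff {s ε y μ : ℕ} (hs : s < b) (hε : ε < b) :
    b * y + s < b * μ + ε ↔ y < μ + if s < ε then 1 else 0 := by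
  rcases lt_trichotomy y μ with h | rfl | h
  · have : b * (y + 1) ≤ b * μ := Nat.mul_le_mul_left b h
    split_ifs <;> constructor <;> intro <;> linarith
  · split_ifs <;> omega
  · have : b * (μ + 1) ≤ b * y := Nat.mul_le_mul_left b h
    split_ifs <;> constructor <;> intro <;> linarith

/-- Faure's function `φ_{b,ε}^σ` at `(Q + ρ) / b`: the local discrepancy at `ε / b` of the one-digit
points `σ q / b`, interpolated linearly between the first `Q` and the first `Q + 1` of them. It is
the contribution of a single digit of `N` to the local discrepancy. -/
noncomputable def digitDisc (b : ℕ) (σ : ℕ → ℕ) (Q : ℕ) (ρ : ℝ) (ε : ℕ) : ℝ :=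
  gridDisc σ b Q ε + ρ * (gridDisc σ b (Q + 1) ε - gridDisc σ b Q ε)

theorem gridDisc_radInv_add_block (hσ : MapsTo σ (Iio b) (Iio b)) {n Q R ε : ℕ} (hQ : Q < b)
    (hR : R ≤ b ^ n) (hε : ε < b) (μ : ℕ) :
    gridDisc (radInv b σ (n + 1)) (b ^ (n + 1)) (b ^ n * Q + R) (b * μ + ε)
      = gridDisc (radInv b σ (n + 1)) (b ^ (n + 1)) (b ^ n * Q) (b * μ + ε)
        + gridDisc (radInv b σ n) (b ^ n) R (μ + if σ Q < ε then 1 else 0)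
        + R / (b ^ n : ℕ) * (gridDisc σ b (Q + 1) ε - gridDisc σ b Q ε) := by
  have hb : (b : ℝ) ≠ 0 := by exact_mod_cast (Nat.zero_lt_of_lt hQ).ne'
  have hcount : Nat.count (fun k => radInv b σ (n + 1) (b ^ n * Q + k) < b * μ + ε) R
      = Nat.count (radInv b σ n · < μ + if σ Q < ε then 1 else 0) R :=
    count_congr_of_lt fun k hk => by
      rw [radInv_succ_mul_add hQ (hk.trans_le hR), mul_add_lt_mul_add_iff (hσ hQ) hε]
  rw [gridDisc_succ, gridDisc, gridDisc, gridDisc, Nat.count_add, hcount]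
  push_cast
  field_simp
  ring

theorem gridDisc_radInv_full_blocks (hσ : BijOn σ (Iio b) (Iio b)) {n Q μ ε : ℕ} (hQ : Q ≤ b)
    (hμ : μ < b ^ n) (hε : ε < b) :
    gridDisc (radInv b σ (n + 1)) (b ^ (n + 1)) (b ^ n * Q) (b * μ + ε) = gridDisc σ b Q ε := by
  have hb : 0 < b := Nat.zero_lt_of_lt hε
  have hpow : ((b ^ n : ℕ) : ℝ) ≠ 0 := by positivity
  induction Q with
  | zero => simp
  | succ Q ih =>
    have hle : (μ + if σ Q < ε then 1 else 0) ≤ b ^ n := by split_ifs <;> omega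
    rw [mul_add_one, gridDisc_radInv_add_block hσ.mapsTo hQ le_rfl hε, ih (by omega),
      gridDisc_eq_zero_of_bijOn (radInv_bijOn hb hσ n) hle, div_self hpow]
    ring

theorem gridDisc_radInv_succ (hσ : BijOn σ (Iio b) (Iio b)) {n Q R μ ε : ℕ} (hQ : Q < b)
    (hR : R ≤ b ^ n) (hμ : μ < b ^ n) (hε : ε < b) :
    gridDisc (radInv b σ (n + 1)) (b ^ (n + 1)) (b ^ n * Q + R) (b * μ + ε)
      = gridDisc (radInv b σ n) (b ^ n) R (μ + if σ Q < ε then 1 else 0)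
        + digitDisc b σ Q (R / (b ^ n : ℕ)) ε := by
  rw [gridDisc_radInv_add_block hσ.mapsTo hQ hR hε, gridDisc_radInv_full_blocks hσ hQ.le hμ hε,
    digitDisc]
  ring

theorem image_gridDisc_radInv_succ (hσ : BijOn σ (Iio b) (Iio b)) {n Q R : ℕ} (hQ : Q < b)
    (hR : R ≤ b ^ n) :
    gridDisc (radInv b σ (n + 1)) (b ^ (n + 1)) (b ^ n * Q + R) '' Iio (b ^ (n + 1))
      = gridDisc (radInv b σ n) (b ^ n) R '' Iio (b ^ n)
        + digitDisc b σ Q (R / (b ^ n : ℕ)) '' Iio b := by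
  have hb : 0 < b := Nat.zero_lt_of_lt hQ
  have hperiod : gridDisc (radInv b σ n) (b ^ n) R (b ^ n)
      = gridDisc (radInv b σ n) (b ^ n) R 0 := by
    rw [gridDisc_self (by positivity) fun m _ => radInv_lt hb hσ.mapsTo n m, gridDisc_zero_right]
  have hshift : ∀ ε, (fun μ => gridDisc (radInv b σ n) (b ^ n) R
      (μ + if σ Q < ε then 1 else 0)) '' Iio (b ^ n)
        = gridDisc (radInv b σ n) (b ^ n) R '' Iio (b ^ n) := by
    intro ε
    split_ifs
    exacts [image_add_one_Iio hperiod, rfl]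
  ext y
  rw [Set.mem_add]
  constructor
  · rintro ⟨l, hl, rfl⟩
    have hμ : l / b < b ^ n := Nat.div_lt_of_lt_mul (by rwa [← pow_succ'])
    have hε : l % b < b := Nat.mod_lt l hb
    refine ⟨_, (hshift (l % b)).subset (mem_image_of_mem _ hμ), _, mem_image_of_mem _ hε, ?_⟩
    rw [← gridDisc_radInv_succ hσ hQ hR hμ hε, Nat.div_add_mod]
  · rintro ⟨_, hν, _, ⟨ε, hε, rfl⟩, rfl⟩
    obtain ⟨μ, hμ, rfl⟩ := (hshift ε).superset hν
    refine ⟨b * μ + ε, ?_, gridDisc_radInv_succ hσ hQ hR hμ hε⟩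
    rw [mem_Iio, pow_succ]
    exact Nat.mul_add_lt_mul_of_lt_of_lt hμ hε

end SelfSimilarity

section Rotation

variable {b : ℕ}

theorem bijOn_add_mod (hb : 0 < b) (a : ℕ) : BijOn (fun s => (s + a) % b) (Iio b) (Iio b) := by
  refine ((finite_Iio b).injOn_iff_bijOn_of_mapsTo fun s _ => Nat.mod_lt _ hb).1 ?_
  intro s hs t ht h
  exact (Nat.ModEq.add_right_cancel' a h).eq_of_lt_of_lt hs ht

theorem ite_add_mod_lt_sub_div {s l : ℕ} (hs : s < b) (hl : l < b) (a : ℕ) :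
    ((if (s + a) % b < (l + a) % b then 1 else 0) - ((l + a) % b : ℕ) / b : ℝ)
      = ((if s < l then 1 else 0) - l / b)
        + ((if (s + a) % b < a % b then 1 else 0) - (a % b : ℕ) / b) := by
  have hb : (b : ℝ) ≠ 0 := by exact_mod_cast (Nat.zero_lt_of_lt hs).ne'
  have ha : a % b < b := Nat.mod_lt a (Nat.zero_lt_of_lt hs)
  have hint : (b * (if (s + a) % b < (l + a) % b then 1 else 0) - ((l + a) % b : ℕ) : ℤ)
      = (b * (if s < l then 1 else 0) - l)
        + (b * (if (s + a) % b < a % b then 1 else 0) - (a % b : ℕ)) := by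
    rw [Nat.add_mod_eq_ite, Nat.add_mod_eq_ite, Nat.mod_eq_of_lt hs, Nat.mod_eq_of_lt hl]
    split_ifs <;> omega
  have hreal := congrArg (Int.cast : ℤ → ℝ) hint
  simp only [Int.cast_add, Int.cast_sub, Int.cast_mul, Int.cast_ite, Int.cast_one, Int.cast_zero,
    Int.cast_natCast] at hreal
  field_simp
  linarith

theorem gridDisc_add_mod {Y : ℕ → ℕ} {N l : ℕ} (hY : ∀ m < N, Y m < b) (hl : l < b) (a : ℕ) :
    gridDisc (fun m => (Y m + a) % b) b N ((l + a) % b)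
      = gridDisc Y b N l + gridDisc (fun m => (Y m + a) % b) b N (a % b) := by
  induction N with
  | zero => simp
  | succ N ih =>
    rw [gridDisc_succ, gridDisc_succ, gridDisc_succ, ih fun m hm => hY m (hm.trans N.lt_succ_self),
      ite_add_mod_lt_sub_div (hY N N.lt_succ_self) hl]
    ring

variable {σ : ℕ → ℕ}

theorem digitDisc_add_mod (hσ : MapsTo σ (Iio b) (Iio b)) {Q ε : ℕ} (hQ : Q < b) (hε : ε < b)
    (a : ℕ) (ρ : ℝ) :
    digitDisc b (fun q => (σ q + a) % b) Q ρ ((ε + a) % b)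
      = digitDisc b (fun q => (σ q + a) % b) Q ρ (a % b) + digitDisc b σ Q ρ ε := by
  rw [digitDisc, digitDisc, digitDisc, gridDisc_add_mod (fun q hq => hσ (hq.trans hQ)) hε,
    gridDisc_add_mod (fun q hq => hσ (Nat.lt_of_lt_of_le hq hQ)) hε]
  ring

theorem image_digitDisc_add_mod (hσ : MapsTo σ (Iio b) (Iio b)) {Q : ℕ} (hQ : Q < b) (a : ℕ)
    (ρ : ℝ) :
    digitDisc b (fun q => (σ q + a) % b) Q ρ '' Iio b
      = {digitDisc b (fun q => (σ q + a) % b) Q ρ (a % b)} + digitDisc b σ Q ρ '' Iio b := by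
  rw [← (bijOn_add_mod (Nat.zero_lt_of_lt hQ) a).image_eq, image_image, singleton_add, image_image,
    (bijOn_add_mod (Nat.zero_lt_of_lt hQ) a).image_eq]
  exact image_congr fun ε hε => digitDisc_add_mod hσ hQ hε a ρ

theorem exists_image_gridDisc_radInv_add_mod (hb : 0 < b) (hσ : BijOn σ (Iio b) (Iio b)) (a : ℕ)
    {n N : ℕ} (hN : N < b ^ n) :
    ∃ c : ℝ, gridDisc (radInv b (fun q => (σ q + a) % b) n) (b ^ n) N '' Iio (b ^ n)
      = {c} + gridDisc (radInv b σ n) (b ^ n) N '' Iio (b ^ n) := by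
  induction n generalizing N with
  | zero => exact ⟨0, by simp [radInv]⟩
  | succ n ih =>
    have hR : N % b ^ n < b ^ n := Nat.mod_lt N (by positivity)
    have hQ : N / b ^ n < b := Nat.div_lt_of_lt_mul (by rwa [← pow_succ])
    have hσ' : BijOn (fun q => (σ q + a) % b) (Iio b) (Iio b) := (bijOn_add_mod hb a).comp hσ
    obtain ⟨c, hc⟩ := ih hR
    refine ⟨c + digitDisc b (fun q => (σ q + a) % b) (N / b ^ n)
      ((N % b ^ n : ℕ) / (b ^ n : ℕ)) (a % b), ?_⟩
    rw [← Nat.div_add_mod N (b ^ n), image_gridDisc_radInv_succ hσ' hQ hR.le,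
      image_gridDisc_radInv_succ hσ hQ hR.le, hc, image_digitDisc_add_mod hσ.mapsTo hQ,
      add_add_add_comm, singleton_add_singleton, Nat.div_add_mod]

theorem diam_image_gridDisc_radInv_add_mod (hb : 0 < b) (hσ : BijOn σ (Iio b) (Iio b)) (a : ℕ)
    {n N : ℕ} (hN : N < b ^ n) :
    Metric.diam (gridDisc (radInv b (fun q => (σ q + a) % b) n) (b ^ n) N '' Iio (b ^ n))
      = Metric.diam (gridDisc (radInv b σ n) (b ^ n) N '' Iio (b ^ n)) := by
  obtain ⟨c, hc⟩ := exists_image_gridDisc_radInv_add_mod hb hσ a hN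
  rw [hc, singleton_add, (isometry_add_left c).diam_image]

end Rotation

theorem symmetry_lemma_shift (b : ℕ) (hb : 2 ≤ b) (σ : ℕ → ℕ)
    (hσ : Set.BijOn σ (Set.Iio b) (Set.Iio b)) (a : ℕ) (ha1 : 1 ≤ a) (hab : a < b)
    (N : ℕ) (hN : 1 ≤ N) :
    disc N (Sperm b σ) = disc N (Sperm b fun x => (σ x + a) % b) := by
  have hb0 : 0 < b := by omega
  have hN0 : (N : ℝ) ≠ 0 := by positivity
  have hσ' : BijOn (fun x => (σ x + a) % b) (Iio b) (Iio b) := (bijOn_add_mod hb0 a).comp hσ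
  refine mul_left_cancel₀ hN0 <| tendsto_nhds_unique_of_eventuallyEq
    (tendsto_diam_gridDisc_radInv hb hσ.mapsTo hN)
    (tendsto_diam_gridDisc_radInv hb hσ'.mapsTo hN) ?_
  filter_upwards [eventually_ge_atTop N] with n hn
  exact (diam_image_gridDisc_radInv_add_mod hb0 hσ a (hn.trans_lt (Nat.lt_pow_self hb))).symm
end

section
/- Let f : [0,1] → ℝ be bounded, continuous, with mean zero, symmetric f(x) = f(1-x), and with Fourier coefficients satisfying f̂(k) ≥ c/k^2 for all nonzero integers k and some c > 0. Let (x_n) be generated greedily from any finite seed by x_N = argmin_x sum_{k<N} f({x - x_k}). Then the extreme discrepancy satisfies D_N(X) ≤ C N^{-1/3} for a constant C depending only on the seed and f. -/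
open scoped Classical ComplexOrder Real

/-!
LeVeque's inequality bounds `(N D_N)³` by `6 N` times the pair energy of the periodized Bernoulli
polynomial `B₂`: the discrepancy function, once centred and made periodic, increases only at its
`N` jumps and falls with slope `-N` between them, so a large value forces a large `L²` norm, and by
`∫ B₁(a - t) B₁(b - t) dt = B₂(a - b) / 2` that norm is a pair energy of `B₂`.
Since `B₂` has Fourier coefficients `1 / (2 π² k²)`, the function `f - ∫ f - 2 π² c B₂` has
nonnegative Fourier coefficients, hence nonnegative pair energies, so the energy of `B₂` is at most
a constant times that of `f - ∫ f`. The latter grows linearly in `N`: a greedy point minimises the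
potential of its predecessors, so the potential there is at most its average `0`, and each step past
the seed adds no more than the diagonal term.
-/

open AddCircle Finset Function MeasureTheory
open scoped ComplexConjugate

section PositiveDefinite

variable {T : ℝ} {ι : Type*}

/-- The energy `∑ i, ∑ j, g (x i - x j)` of the points `x i`, `i ∈ s`, under the interaction `g`.
The diagonal is included. -/
def pairEnergy {G R : Type*} [Sub G] [AddCommMonoid R] (g : G → R) (s : Finset ι) (x : ι → G) : R :=
  ∑ i ∈ s, ∑ j ∈ s, g (x i - x j)

theorem sum_sum_mul_conj_eq_norm_sq (s : Finset ι) (z : ι → ℂ) :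
    ∑ i ∈ s, ∑ j ∈ s, z i * conj (z j) = ((‖∑ i ∈ s, z i‖ ^ 2 : ℝ) : ℂ) := by
  rw [← sum_mul_sum, ← map_sum, Complex.mul_conj', Complex.ofReal_pow]

theorem fourier_apply_sub (k : ℤ) (x y : AddCircle T) :
    fourier k (x - y) = fourier k x * conj (fourier k y) := by
  rw [← fourier_neg, fourier_apply, fourier_apply, fourier_apply, smul_sub, sub_eq_add_neg,
    toCircle_add, Circle.coe_mul, neg_smul]

theorem pairEnergy_fourier (k : ℤ) (s : Finset ι) (x : ι → AddCircle T) :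
    pairEnergy (fourier k) s x = ((‖∑ i ∈ s, fourier k (x i)‖ ^ 2 : ℝ) : ℂ) := by
  simp only [pairEnergy, fourier_apply_sub, sum_sum_mul_conj_eq_norm_sq]

variable [Fact (0 < T)]

theorem sum_sum_fourierCoeff_sub {E : Type*} [NormedAddCommGroup E] [NormedSpace ℂ E]
    {F : AddCircle T → E} (hF : Integrable F haarAddCircle) (S : Finset ℤ) :
    ∑ j ∈ S, ∑ l ∈ S, fourierCoeff F (l - j) =
      ∫ t, ((‖∑ l ∈ S, fourier l t‖ ^ 2 : ℝ) : ℂ) • F t ∂haarAddCircle := by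
  have hmul (j l : ℤ) (t : AddCircle T) :
      fourier j t * conj (fourier l t) = fourier (-(l - j)) t := by
    rw [← fourier_neg, ← fourier_add, neg_sub, sub_eq_add_neg]
  simp_rw [← sum_sum_mul_conj_eq_norm_sq, hmul, sum_smul]
  rw [integral_finsetSum _ fun j _ => integrable_finsetSum _ fun l _ => hF.fourier_smul _]
  exact sum_congr rfl fun j _ => (integral_finsetSum _ fun l _ => hF.fourier_smul _).symm

theorem fourierCoeff_const (z : ℂ) (k : ℤ) :
    fourierCoeff (fun _ : AddCircle T => z) k = if k = 0 then z else 0 := by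
  have hone : (fun _ : AddCircle T => (1 : ℂ)) = fourier 0 := funext fun _ => fourier_zero.symm
  rw [← mul_one z, fourierCoeff.const_mul, hone, fourierCoeff_fourier, Pi.single_apply, mul_ite,
    mul_zero]

theorem integral_norm_sum_fourier_sq (S : Finset ℤ) :
    ∫ t : AddCircle T, ‖∑ l ∈ S, fourier l t‖ ^ 2 ∂haarAddCircle = #S := by
  have h := sum_sum_fourierCoeff_sub (F := fun _ : AddCircle T => (1 : ℂ)) (integrable_const _) S
  simp only [fourierCoeff_const, sub_eq_zero, smul_eq_mul, mul_one, sum_ite_eq',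
    integral_complex_ofReal, sum_ite_mem, inter_self, sum_const, nsmul_eq_mul] at h
  exact_mod_cast h.symm

theorem norm_sum_sum_fourierCoeff_sub_le {E : Type*} [NormedAddCommGroup E] [NormedSpace ℂ E]
    {F : AddCircle T → E} (hF : Integrable F haarAddCircle) {C : ℝ} (hC : ∀ t, ‖F t‖ ≤ C)
    (S : Finset ℤ) : ‖∑ j ∈ S, ∑ l ∈ S, fourierCoeff F (l - j)‖ ≤ #S * C := by
  rw [sum_sum_fourierCoeff_sub hF, ← integral_norm_sum_fourier_sq (T := T), ← integral_mul_const]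
  refine norm_integral_le_of_norm_le ?_ (.of_forall fun t => ?_)
  · exact Continuous.integrable_of_hasCompactSupport (by fun_prop) (.of_compactSpace _)
  · rw [norm_smul, Complex.norm_real, Real.norm_of_nonneg (by positivity)]
    gcongr
    exact hC t

/- Bounds the sum of `F̂ (l - j)` over the square `|j|, |l| ≤ 2 M`: each of its rows with `|j| ≤ M`
contains every `F̂ k` with `|k| ≤ M`, and these rows are about half of all rows. -/
theorem sum_Icc_norm_fourierCoeff_le_of_nonneg {F : AddCircle T → ℂ}
    (hF : Integrable F haarAddCircle) {C : ℝ} (hC : ∀ t, ‖F t‖ ≤ C)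
    (hnonneg : ∀ k, 0 ≤ fourierCoeff F k) (M : ℕ) :
    ∑ k ∈ Icc (-M : ℤ) M, ‖fourierCoeff F k‖ ≤ 2 * C := by
  set a : ℤ → ℝ := fun k => ‖fourierCoeff F k‖
  have ha (k : ℤ) : fourierCoeff F k = a k := Complex.eq_coe_norm_of_nonneg (hnonneg k)
  have hC0 : 0 ≤ C := (norm_nonneg _).trans (hC 0)
  have hrow : ∀ j ∈ Icc (-M : ℤ) M,
      ∑ k ∈ Icc (-M : ℤ) M, a k ≤ ∑ l ∈ Icc (-(2 * M) : ℤ) (2 * M), a (l - j) := by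
    intro j hj
    rw [← sum_image (f := a) (g := fun l => l - j) (sub_left_injective.injOn)]
    refine sum_le_sum_of_subset_of_nonneg (fun k hk => mem_image.2 ⟨k + j, ?_, by ring⟩)
      fun _ _ _ => norm_nonneg _
    rw [mem_Icc] at hj hk ⊢
    constructor <;> linarith
  have hmul : (2 * M + 1) * ∑ k ∈ Icc (-M : ℤ) M, a k ≤ (2 * M + 1) * (2 * C) :=
    calc (2 * M + 1) * ∑ k ∈ Icc (-M : ℤ) M, a k
        = ∑ _j ∈ Icc (-M : ℤ) M, ∑ k ∈ Icc (-M : ℤ) M, a k := by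
          rw [sum_const, Int.card_Icc, nsmul_eq_mul,
            show (M + 1 - -M : ℤ).toNat = 2 * M + 1 by omega]
          push_cast
          rfl
      _ ≤ ∑ j ∈ Icc (-M : ℤ) M, ∑ l ∈ Icc (-(2 * M) : ℤ) (2 * M), a (l - j) := sum_le_sum hrow
      _ ≤ ∑ j ∈ Icc (-(2 * M) : ℤ) (2 * M), ∑ l ∈ Icc (-(2 * M) : ℤ) (2 * M), a (l - j) :=
          sum_le_sum_of_subset_of_nonneg (Icc_subset_Icc (by omega) (by omega))
            fun _ _ _ => sum_nonneg fun _ _ => norm_nonneg _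
      _ ≤ ‖∑ j ∈ Icc (-(2 * M) : ℤ) (2 * M), ∑ l ∈ Icc (-(2 * M) : ℤ) (2 * M),
            fourierCoeff F (l - j)‖ := by
          simp_rw [ha, ← Complex.ofReal_sum, Complex.norm_real]
          exact Real.le_norm_self _
      _ ≤ #(Icc (-(2 * M) : ℤ) (2 * M)) * C := norm_sum_sum_fourierCoeff_sub_le hF hC _
      _ = (4 * M + 1) * C := by
          rw [Int.card_Icc, show (2 * M + 1 - -(2 * M) : ℤ).toNat = 4 * M + 1 by omega]
          push_cast
          rfl
      _ ≤ (2 * M + 1) * (2 * C) := by linarith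
  exact le_of_mul_le_mul_left hmul (by positivity)

theorem summable_fourierCoeff_of_nonneg {F : AddCircle T → ℂ} (hF : Integrable F haarAddCircle)
    {C : ℝ} (hC : ∀ t, ‖F t‖ ≤ C) (hnonneg : ∀ k, 0 ≤ fourierCoeff F k) :
    Summable (fourierCoeff F) := by
  refine .of_norm (summable_of_sum_le (c := 2 * C) (fun _ => norm_nonneg _) fun u => ?_)
  obtain ⟨M, hM⟩ : ∃ M : ℕ, u ⊆ Icc (-M : ℤ) M := by
    refine ⟨u.sup Int.natAbs, fun k hk => mem_Icc.2 ?_⟩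
    have := le_sup (f := Int.natAbs) hk
    omega
  exact (sum_le_sum_of_subset_of_nonneg hM fun _ _ _ => norm_nonneg _).trans
    (sum_Icc_norm_fourierCoeff_le_of_nonneg hF hC hnonneg M)

theorem pairEnergy_nonneg_of_fourierCoeff_nonneg {F : C(AddCircle T, ℂ)}
    (hF : ∀ k, 0 ≤ fourierCoeff F k) (s : Finset ι) (x : ι → AddCircle T) :
    0 ≤ pairEnergy F s x := by
  have hint : Integrable F haarAddCircle :=
    F.continuous.integrable_of_hasCompactSupport (.of_compactSpace _)
  have hsum := summable_fourierCoeff_of_nonneg hint F.norm_coe_le_norm hF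
  have hseries : HasSum (fun k => fourierCoeff F k * pairEnergy (fourier k) s x)
      (pairEnergy F s x) := by
    simp only [pairEnergy, mul_sum]
    exact hasSum_sum fun i _ => hasSum_sum fun j _ =>
      has_pointwise_sum_fourier_series_of_summable hsum (x i - x j)
  refine hseries.nonneg fun k => mul_nonneg (hF k) ?_
  rw [pairEnergy_fourier]
  exact Complex.zero_le_real.2 (sq_nonneg _)

theorem fourierCoeff_sub {E : Type*} [NormedAddCommGroup E] [NormedSpace ℂ E]
    {F G : AddCircle T → E} (hF : Integrable F haarAddCircle) (hG : Integrable G haarAddCircle)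
    (k : ℤ) :
    fourierCoeff (fun t => F t - G t) k = fourierCoeff F k - fourierCoeff G k := by
  simp only [fourierCoeff, smul_sub]
  exact integral_sub (hF.fourier_smul _) (hG.fourier_smul _)

theorem pairEnergy_le_pairEnergy_of_fourierCoeff_le {F G : C(AddCircle T, ℝ)}
    (hFG : ∀ k, fourierCoeff (fun t => (F t : ℂ)) k ≤ fourierCoeff (fun t => (G t : ℂ)) k)
    (s : Finset ι) (x : ι → AddCircle T) : pairEnergy F s x ≤ pairEnergy G s x := by
  have hint (F : C(AddCircle T, ℝ)) : Integrable (fun t => (F t : ℂ)) haarAddCircle :=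
    Continuous.integrable_of_hasCompactSupport (by fun_prop) (.of_compactSpace _)
  let D : C(AddCircle T, ℂ) := ⟨fun t => (G t : ℂ) - F t, by fun_prop⟩
  have hD : 0 ≤ pairEnergy D s x := pairEnergy_nonneg_of_fourierCoeff_nonneg (fun k => by
    rw [ContinuousMap.coe_mk, fourierCoeff_sub (hint G) (hint F)]
    exact sub_nonneg.2 (hFG k)) s x
  have hcast : pairEnergy D s x = ((pairEnergy G s x - pairEnergy F s x : ℝ) : ℂ) := by
    simp only [pairEnergy, D, ContinuousMap.coe_mk, sum_sub_distrib, Complex.ofReal_sub,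
      Complex.ofReal_sum]
  rwa [hcast, Complex.zero_le_real, sub_nonneg] at hD

end PositiveDefinite

section OneSidedLipschitz

theorem intervalIntegrable_mul_of_abs_le {u v : ℝ → ℝ} {C D : ℝ} (hu : Measurable u)
    (hv : Measurable v) (hC : ∀ t, |u t| ≤ C) (hD : ∀ t, |v t| ≤ D) (a b : ℝ) :
    IntervalIntegrable (fun t => u t * v t) volume a b := by
  refine (intervalIntegrable_const (c := C * D)).mono_fun (hu.mul hv).aestronglyMeasurable
    (.of_forall fun t => ?_)
  simp only [norm_mul, Real.norm_eq_abs]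
  exact mul_le_mul ((hC t).trans (le_abs_self C)) ((hD t).trans (le_abs_self D)) (abs_nonneg _)
    (abs_nonneg _)

theorem integral_sub_mul_sub_sq {a L : ℝ} (hL : L ≠ 0) (p : ℝ) :
    ∫ t in p..p + a / L, (a - L * (t - p)) ^ 2 = a ^ 3 / (3 * L) := by
  have hshift (t : ℝ) : a - L * (t - p) = a + L * p - L * t := by ring
  have hlower : a + L * p - L * (p + a / L) = 0 := by field_simp; ring
  simp_rw [hshift, intervalIntegral.integral_comp_sub_mul (fun u => u ^ 2) hL, integral_pow, hlower,
    smul_eq_mul]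
  field_simp
  ring

variable {H : ℝ → ℝ} {L : ℝ}

theorem measurable_of_le_add_mul_sub (hslope : ∀ s t, s ≤ t → H s ≤ H t + L * (t - s)) :
    Measurable H := by
  have hmono : Monotone fun t => H t + L * t := fun s t hst => by
    dsimp only
    linarith [hslope s t hst]
  have hH : H = (fun t => H t + L * t) - fun t => L * t := by simp [funext_iff]
  rw [hH]
  exact hmono.measurable.sub (measurable_const_mul L)

/- From `p` on, `H` stays above the line of slope `-L` through `(p, H p)`, which is positive on an
interval of length `H p / L ≤ 1`. -/
theorem pow_three_div_le_integral_posPart_sq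
    (hslope : ∀ s t, s ≤ t → H s ≤ H t + L * (t - s)) (hL_pos : 0 < L) (hL : ∀ t, H t ≤ L) {p : ℝ}
    (hp : 0 ≤ H p) : H p ^ 3 / (3 * L) ≤ ∫ t in p..p + 1, (H t)⁺ ^ 2 := by
  have hlength : H p / L ≤ 1 := (div_le_one hL_pos).2 (hL p)
  have hint (a b : ℝ) : IntervalIntegrable (fun t => (H t)⁺ ^ 2) volume a b := by
    have hmeas : Measurable fun t => (H t)⁺ := (measurable_of_le_add_mul_sub hslope).sup_const 0
    have hbound (t : ℝ) : |(H t)⁺| ≤ L := by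
      rw [abs_of_nonneg (posPart_nonneg _)]
      exact sup_le (hL t) hL_pos.le
    simpa only [sq] using intervalIntegrable_mul_of_abs_le hmeas hmeas hbound hbound a b
  have hline : ∀ t ∈ Set.Icc p (p + H p / L), (H p - L * (t - p)) ^ 2 ≤ (H t)⁺ ^ 2 := by
    rintro t ⟨hpt, htp⟩
    have hline_nonneg : L * (t - p) ≤ H p := by rw [← le_div_iff₀' hL_pos]; linarith
    have := hslope p t hpt
    exact pow_le_pow_left₀ (by linarith) (by linarith [le_posPart (H t)]) 2
  calc H p ^ 3 / (3 * L)
      = ∫ t in p..p + H p / L, (H p - L * (t - p)) ^ 2 :=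
        (integral_sub_mul_sub_sq hL_pos.ne' p).symm
    _ ≤ ∫ t in p..p + H p / L, (H t)⁺ ^ 2 :=
        intervalIntegral.integral_mono_on (le_add_of_nonneg_right (by positivity))
          (Continuous.intervalIntegrable (by fun_prop) _ _) (hint _ _) hline
    _ ≤ ∫ t in p..p + 1, (H t)⁺ ^ 2 :=
        intervalIntegral.integral_mono_interval le_rfl
          (le_add_of_nonneg_right (by positivity)) (by linarith)
          (.of_forall fun _ => sq_nonneg _) (hint _ _)

theorem posPart_pow_three_le_integral_sq (hper : Periodic H 1)
    (hslope : ∀ s t, s ≤ t → H s ≤ H t + L * (t - s)) (hL : ∀ t, H t ≤ L) (p : ℝ) :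
    (H p)⁺ ^ 3 ≤ 3 * L * ∫ t in (0 : ℝ)..1, (H t)⁺ ^ 2 := by
  rcases le_or_gt (H p) 0 with hp | hp
  · have hL_nonneg : 0 ≤ L := by linarith [hslope p (p + 1) (by linarith), hper p]
    have hint_nonneg : 0 ≤ ∫ t in (0 : ℝ)..1, (H t)⁺ ^ 2 :=
      intervalIntegral.integral_nonneg zero_le_one fun _ _ => sq_nonneg _
    rw [posPart_of_nonpos hp, zero_pow three_ne_zero]
    positivity
  · have hL_pos : 0 < L := hp.trans_le (hL p)
    have hperiod := (hper.comp fun u => u⁺ ^ 2).intervalIntegral_add_eq p 0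
    rw [zero_add] at hperiod
    rw [posPart_of_nonneg hp.le, ← div_le_iff₀' (by positivity)]
    exact (pow_three_div_le_integral_posPart_sq hslope hL_pos hL hp.le).trans_eq hperiod

theorem negPart_pow_three_le_integral_sq (hper : Periodic H 1)
    (hslope : ∀ s t, s ≤ t → H s ≤ H t + L * (t - s)) (hL : ∀ t, -L ≤ H t) (p : ℝ) :
    (H p)⁻ ^ 3 ≤ 3 * L * ∫ t in (0 : ℝ)..1, (H t)⁻ ^ 2 := by
  have hreflect := posPart_pow_three_le_integral_sq (H := fun t => -H (-t)) (L := L)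
    (fun t => by simp only [neg_add, ← sub_eq_add_neg, hper.sub_eq])
    (fun s t hst => by linarith [hslope (-t) (-s) (neg_le_neg hst)])
    (fun t => neg_le.1 (hL (-t))) (-p)
  have hintegral : ∫ t in (0 : ℝ)..1, (H (-t))⁻ ^ 2 = ∫ t in (0 : ℝ)..1, (H t)⁻ ^ 2 := by
    have hperiod := (hper.comp fun u => u⁻ ^ 2).intervalIntegral_add_eq (-1) 0
    rw [neg_add_cancel, zero_add] at hperiod
    rw [intervalIntegral.integral_comp_neg fun t => (H t)⁻ ^ 2, neg_zero]
    exact hperiod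
  simpa only [posPart_neg, neg_neg, hintegral] using hreflect

theorem integral_posPart_sq_add_integral_negPart_sq
    (hH : Measurable H) (hL : ∀ t, |H t| ≤ L) (a b : ℝ) :
    (∫ t in a..b, (H t)⁺ ^ 2) + ∫ t in a..b, (H t)⁻ ^ 2 = ∫ t in a..b, H t ^ 2 := by
  have hint {u : ℝ → ℝ} (hu : Measurable u) (huH : ∀ t, |u t| ≤ |H t|) :
      IntervalIntegrable (fun t => u t ^ 2) volume a b := by
    have hbound (t : ℝ) : |u t| ≤ L := (huH t).trans (hL t)
    simpa only [sq] using intervalIntegrable_mul_of_abs_le hu hu hbound hbound a b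
  rw [← intervalIntegral.integral_add]
  · refine intervalIntegral.integral_congr fun t _ => ?_
    rcases le_total 0 (H t) with h | h <;> simp [h]
  · refine hint (hH.sup_const 0) fun t => ?_
    rcases le_total 0 (H t) with h | h <;> simp [h]
  · refine hint (hH.neg.sup_const 0) fun t => ?_
    rcases le_total 0 (H t) with h | h <;> simp [h]

theorem sub_pow_three_le_integral_sq (hper : Periodic H 1)
    (hslope : ∀ s t, s ≤ t → H s ≤ H t + L * (t - s)) (hL : ∀ t, |H t| ≤ L) {p q : ℝ}
    (hpq : H p ≤ H q) : (H q - H p) ^ 3 ≤ 12 * L * ∫ t in (0 : ℝ)..1, H t ^ 2 :=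
  calc (H q - H p) ^ 3
      ≤ ((H q)⁺ + (H p)⁻) ^ 3 :=
        pow_le_pow_left₀ (sub_nonneg.2 hpq) (by linarith [le_posPart (H q), neg_le_negPart (H p)]) 3
    _ ≤ 4 * ((H q)⁺ ^ 3 + (H p)⁻ ^ 3) :=
        (add_pow_le (posPart_nonneg _) (negPart_nonneg _) 3).trans_eq (by norm_num)
    _ ≤ 4 * (3 * L * (∫ t in (0 : ℝ)..1, (H t)⁺ ^ 2) + 3 * L * ∫ t in (0 : ℝ)..1, (H t)⁻ ^ 2) := by
        gcongr
        · exact posPart_pow_three_le_integral_sq hper hslope (fun t => (abs_le.1 (hL t)).2) q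
        · exact negPart_pow_three_le_integral_sq hper hslope (fun t => (abs_le.1 (hL t)).1) p
    _ = 12 * L * ∫ t in (0 : ℝ)..1, H t ^ 2 := by
        rw [← mul_add, integral_posPart_sq_add_integral_negPart_sq
          (measurable_of_le_add_mul_sub hslope) hL]
        ring

theorem abs_sub_pow_three_le_integral_sq (hper : Periodic H 1)
    (hslope : ∀ s t, s ≤ t → H s ≤ H t + L * (t - s)) (hL : ∀ t, |H t| ≤ L) (p q : ℝ) :
    |H q - H p| ^ 3 ≤ 12 * L * ∫ t in (0 : ℝ)..1, H t ^ 2 := by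
  rcases le_total (H p) (H q) with h | h
  · rw [abs_of_nonneg (sub_nonneg.2 h)]
    exact sub_pow_three_le_integral_sq hper hslope hL h
  · rw [abs_sub_comm, abs_of_nonneg (sub_nonneg.2 h)]
    exact sub_pow_three_le_integral_sq hper hslope hL h

end OneSidedLipschitz

section LeVeque

theorem liftIco_one_coe {α : Type*} (f : ℝ → α) (y : ℝ) :
    liftIco 1 0 f (y : UnitAddCircle) = f (Int.fract y) := by
  rw [← coe_fract, liftIco_zero_coe_apply ⟨Int.fract_nonneg y, Int.fract_lt_one y⟩]

/-- The sawtooth function, the `1`-periodic extension of the first Bernoulli polynomial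
`t - 1 / 2` from `[0, 1)`. -/
noncomputable def sawtooth (t : ℝ) : ℝ := Int.fract t - 1 / 2

theorem sawtooth_periodic : Periodic sawtooth 1 := fun t => by simp [sawtooth]

theorem measurable_sawtooth : Measurable sawtooth := measurable_fract.sub_const _

theorem abs_sawtooth_le (t : ℝ) : |sawtooth t| ≤ 1 / 2 := by
  rw [sawtooth, abs_le]
  constructor <;> linarith [Int.fract_nonneg t, Int.fract_lt_one t]

theorem sawtooth_le_sawtooth_add_sub {u v : ℝ} (h : v ≤ u) : sawtooth u ≤ sawtooth v + (u - v) := by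
  have hfloor : (⌊v⌋ : ℝ) ≤ ⌊u⌋ := by exact_mod_cast Int.floor_mono h
  rw [sawtooth, sawtooth, Int.fract, Int.fract]
  linarith

theorem sawtooth_sub_eq {y t : ℝ} (hy : y ∈ Set.Ico (0 : ℝ) 1) (ht : t ∈ Set.Icc (0 : ℝ) 1) :
    sawtooth (y - t) = (if y < t then 1 else 0) - t + (y - 1 / 2) := by
  have hfract : Int.fract (y - t) = y - t + if y < t then 1 else 0 := by
    split_ifs with h
    · rw [← Int.fract_add_one]
      exact Int.fract_eq_self.2 ⟨by linarith [hy.1, ht.2], by linarith⟩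
    · rw [add_zero]
      exact Int.fract_eq_self.2 ⟨by linarith, by linarith [hy.2, ht.1]⟩
  rw [sawtooth, hfract]
  ring

theorem intervalIntegrable_sawtooth_mul_sawtooth {φ ψ : ℝ → ℝ} (hφ : Measurable φ)
    (hψ : Measurable ψ) (a b : ℝ) :
    IntervalIntegrable (fun t => sawtooth (φ t) * sawtooth (ψ t)) volume a b :=
  intervalIntegrable_mul_of_abs_le (measurable_sawtooth.comp hφ) (measurable_sawtooth.comp hψ)
    (fun _ => abs_sawtooth_le _) (fun _ => abs_sawtooth_le _) a b

theorem integral_add_mul_sub_half (A p q : ℝ) :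
    ∫ t in p..q, (A + t) * (t - 1 / 2) =
      (q ^ 3 - p ^ 3) / 3 + (A - 1 / 2) * ((q ^ 2 - p ^ 2) / 2) - (q - p) * (A / 2) := by
  have hexpand (t : ℝ) : (A + t) * (t - 1 / 2) = t ^ 2 + (A - 1 / 2) * t - A / 2 := by ring
  simp_rw [hexpand]
  rw [intervalIntegral.integral_sub, intervalIntegral.integral_add, integral_pow,
    intervalIntegral.integral_const_mul, integral_id, intervalIntegral.integral_const, smul_eq_mul]
  · norm_num
  all_goals exact Continuous.intervalIntegrable (by fun_prop) _ _

theorem integral_sawtooth_add_mul_sawtooth {d : ℝ} (hd : d ∈ Set.Ico (0 : ℝ) 1) :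
    ∫ t in (0 : ℝ)..1, sawtooth (d + t) * sawtooth t = bernoulliFun 2 d / 2 := by
  obtain ⟨hd0, hd1⟩ := hd
  have hint (a b : ℝ) :=
    intervalIntegrable_sawtooth_mul_sawtooth (measurable_const_add d) measurable_id' a b
  have hsawtooth {t : ℝ} (h0 : 0 ≤ t) (h1 : t < 1) : sawtooth t = t - 1 / 2 := by
    rw [sawtooth, Int.fract_eq_self.2 ⟨h0, h1⟩]
  have hleft : ∫ t in (0 : ℝ)..1 - d, sawtooth (d + t) * sawtooth t =
      ∫ t in (0 : ℝ)..1 - d, (d - 1 / 2 + t) * (t - 1 / 2) := by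
    refine intervalIntegral.integral_congr_Ioo_of_le (by linarith) fun t ht => ?_
    rw [hsawtooth (by linarith [ht.1]) (by linarith [ht.2]),
      hsawtooth (by linarith [ht.1]) (by linarith [ht.2])]
    ring
  have hright : ∫ t in 1 - d..1, sawtooth (d + t) * sawtooth t =
      ∫ t in 1 - d..1, (d - 3 / 2 + t) * (t - 1 / 2) := by
    refine intervalIntegral.integral_congr_Ioo_of_le (by linarith) fun t ht => ?_
    rw [← sawtooth_periodic.sub_eq, hsawtooth (by linarith [ht.1]) (by linarith [ht.2]),
      hsawtooth (by linarith [ht.1]) ht.2]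
    ring
  rw [← intervalIntegral.integral_add_adjacent_intervals (hint 0 (1 - d)) (hint (1 - d) 1)]
  rw [hleft, hright, integral_add_mul_sub_half, integral_add_mul_sub_half, bernoulliFun_two]
  ring

theorem integral_sawtooth_sub_mul_sawtooth_sub (a b : ℝ) :
    ∫ t in (0 : ℝ)..1, sawtooth (a - t) * sawtooth (b - t) =
      periodizedBernoulli 2 ((a : UnitAddCircle) - b) / 2 := by
  have hper : Periodic (fun t => sawtooth (Int.fract (a - b) + t) * sawtooth t) 1 := fun t => by
    dsimp only
    rw [← add_assoc, sawtooth_periodic, sawtooth_periodic]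
  have hshift (t : ℝ) : sawtooth (a - t) = sawtooth (Int.fract (a - b) + (b - t)) := by
    rw [sawtooth, sawtooth, Int.fract_eq_fract.2 ⟨⌊a - b⌋, ?_⟩]
    rw [Int.fract]
    ring
  calc ∫ t in (0 : ℝ)..1, sawtooth (a - t) * sawtooth (b - t)
      = ∫ t in b - 1..b - 1 + 1, sawtooth (Int.fract (a - b) + t) * sawtooth t := by
        simp_rw [hshift]
        rw [intervalIntegral.integral_comp_sub_left
          fun t => sawtooth (Int.fract (a - b) + t) * sawtooth t, sub_zero, sub_add_cancel]
    _ = ∫ t in (0 : ℝ)..1, sawtooth (Int.fract (a - b) + t) * sawtooth t := by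
        rw [hper.intervalIntegral_add_eq _ 0, zero_add]
    _ = periodizedBernoulli 2 ((a : UnitAddCircle) - b) / 2 := by
        rw [integral_sawtooth_add_mul_sawtooth ⟨Int.fract_nonneg _, Int.fract_lt_one _⟩,
          ← AddCircle.coe_sub, periodizedBernoulli, liftIco_one_coe]

variable {ι : Type*} (s : Finset ι) (x : ι → ℝ)

/-- The discrepancy function `t ↦ #{i ∈ s | x i < t} - #s * t` of points in `[0, 1)`, shifted
to have mean zero over `[0, 1]` and extended to `ℝ` with period `1`. -/
noncomputable def discFun (t : ℝ) : ℝ := ∑ i ∈ s, sawtooth (x i - t)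

theorem discFun_periodic : Periodic (discFun s x) 1 := fun t => by
  simp only [discFun, ← sub_sub, sawtooth_periodic.sub_eq]

theorem abs_discFun_le (t : ℝ) : |discFun s x t| ≤ #s := by
  refine (abs_sum_le_sum_abs _ _).trans ?_
  simpa using sum_le_card_nsmul s _ 1 fun i _ => (abs_sawtooth_le (x i - t)).trans (by norm_num)

theorem discFun_le_add_mul_sub {a b : ℝ} (hab : a ≤ b) :
    discFun s x a ≤ discFun s x b + #s * (b - a) := by
  rw [discFun, discFun, ← nsmul_eq_mul, ← sum_const, ← sum_add_distrib]
  refine sum_le_sum fun i _ => ?_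
  simpa using sawtooth_le_sawtooth_add_sub (sub_le_sub_left hab (x i))

theorem integral_discFun_sq :
    ∫ t in (0 : ℝ)..1, discFun s x t ^ 2 =
      pairEnergy (periodizedBernoulli 2) s (fun i => (x i : UnitAddCircle)) / 2 := by
  have hint (i j : ι) := intervalIntegrable_sawtooth_mul_sawtooth
    (measurable_const_sub (x i)) (measurable_const_sub (x j)) 0 1
  simp_rw [discFun, sq, sum_mul_sum]
  rw [intervalIntegral.integral_finsetSum fun i _ => by
    simpa only [Finset.sum_fn] using IntervalIntegrable.sum s fun j _ => hint i j]
  simp_rw [pairEnergy, sum_div]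
  refine sum_congr rfl fun i _ => ?_
  rw [intervalIntegral.integral_finsetSum fun j _ => hint i j]
  exact sum_congr rfl fun j _ => integral_sawtooth_sub_mul_sawtooth_sub (x i) (x j)

variable {s x}

theorem card_filter_sub_eq_discFun_sub {α β : ℝ} (hx : ∀ i ∈ s, x i ∈ Set.Ico (0 : ℝ) 1)
    (hα : 0 ≤ α) (hαβ : α ≤ β) (hβ : β ≤ 1) :
    (#{i ∈ s | α ≤ x i ∧ x i < β} : ℝ) - #s * (β - α) = discFun s x β - discFun s x α := by
  rw [card_filter, Nat.cast_sum, ← nsmul_eq_mul, ← sum_const, discFun, discFun, ← sum_sub_distrib,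
    ← sum_sub_distrib]
  refine sum_congr rfl fun i hi => ?_
  rw [sawtooth_sub_eq (hx i hi) ⟨hα.trans hαβ, hβ⟩, sawtooth_sub_eq (hx i hi) ⟨hα, hαβ.trans hβ⟩]
  rcases lt_or_ge (x i) α with h | h
  · simp [h, h.trans_le hαβ, h.not_ge]
  · simp only [h, h.not_gt, true_and, ↓reduceIte, Nat.cast_ite, Nat.cast_one, Nat.cast_zero]
    ring

theorem leVeque_inequality {α β : ℝ} (hx : ∀ i ∈ s, x i ∈ Set.Ico (0 : ℝ) 1)
    (hα : 0 ≤ α) (hαβ : α ≤ β) (hβ : β ≤ 1) :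
    |(#{i ∈ s | α ≤ x i ∧ x i < β} : ℝ) - #s * (β - α)| ^ 3 ≤
      6 * #s * pairEnergy (periodizedBernoulli 2) s (fun i => (x i : UnitAddCircle)) := by
  rw [card_filter_sub_eq_discFun_sub hx hα hαβ hβ]
  calc |discFun s x β - discFun s x α| ^ 3
      ≤ 12 * #s * ∫ t in (0 : ℝ)..1, discFun s x t ^ 2 :=
        abs_sub_pow_three_le_integral_sq (discFun_periodic s x)
          (fun _ _ => discFun_le_add_mul_sub s x) (abs_discFun_le s x) α β
    _ = 6 * #s * pairEnergy (periodizedBernoulli 2) s (fun i => (x i : UnitAddCircle)) := by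
        rw [integral_discFun_sq]
        ring

theorem pairEnergy_periodizedBernoulli_two_nonneg (s : Finset ι) (x : ι → ℝ) :
    0 ≤ pairEnergy (periodizedBernoulli 2) s (fun i => (x i : UnitAddCircle)) := by
  have hsq : 0 ≤ ∫ t in (0 : ℝ)..1, discFun s x t ^ 2 :=
    intervalIntegral.integral_nonneg zero_le_one fun _ _ => sq_nonneg _
  linarith [integral_discFun_sq s x]

theorem disc_le_rpow_pairEnergy {N : ℕ} (hN : 0 < N) {x : ℕ → ℝ}
    (hx : ∀ n < N, x n ∈ Set.Ico (0 : ℝ) 1) :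
    disc N x ≤ (6 / N ^ 2 * pairEnergy (periodizedBernoulli 2) (range N)
      fun n => (x n : UnitAddCircle)) ^ (1 / 3 : ℝ) := by
  have hE := pairEnergy_periodizedBernoulli_two_nonneg (range N) x
  refine Real.iSup_le (fun ⟨⟨α, β⟩, hα, hαβ, hβ⟩ => ?_) (by positivity)
  set A := (#{n ∈ range N | α ≤ x n ∧ x n < β} : ℝ)
  set E := pairEnergy (periodizedBernoulli 2) (range N) fun n => (x n : UnitAddCircle)
  have hleVeque : |A - N * (β - α)| ^ 3 ≤ 6 * N * E := by
    simpa only [card_range] using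
      leVeque_inequality (fun n hn => hx n (mem_range.1 hn)) hα hαβ.le hβ
  rw [one_div, Real.le_rpow_inv_iff_of_pos (abs_nonneg _) (by positivity) three_pos,
    Real.rpow_ofNat]
  calc |A / N - (β - α)| ^ 3
      = |A - N * (β - α)| ^ 3 / N ^ 3 := by
        rw [← Nat.abs_cast N, ← div_pow, ← abs_div, Nat.abs_cast, sub_div,
          mul_div_cancel_left₀ _ (by positivity)]
    _ ≤ 6 * N * E / N ^ 3 := by gcongr
    _ = 6 / N ^ 2 * E := by field_simp

end LeVeque

section Diaphony

theorem fourierCoeff_sub_integral {T : ℝ} [Fact (0 < T)] {F : AddCircle T → ℝ}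
    (hF : Integrable F haarAddCircle) (k : ℤ) :
    fourierCoeff (fun t => ((F t - ∫ u, F u ∂haarAddCircle : ℝ) : ℂ)) k =
      if k = 0 then 0 else fourierCoeff (fun t => (F t : ℂ)) k := by
  simp only [Complex.ofReal_sub]
  rw [fourierCoeff_sub hF.ofReal (integrable_const _), fourierCoeff_const]
  split_ifs with hk
  · rw [hk, fourierCoeff]
    simp only [neg_zero, fourier_zero, one_smul]
    rw [integral_complex_ofReal, sub_self]
  · rw [sub_zero]

theorem fourierCoeff_mul_periodizedBernoulli_two (c : ℝ) (k : ℤ) :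
    fourierCoeff (fun t => ((2 * π ^ 2 * c * periodizedBernoulli 2 t : ℝ) : ℂ)) k =
      c / (k : ℂ) ^ 2 := by
  have hbernoulli := fourierCoeff_bernoulli_eq two_ne_zero k
  rw [comp_def] at hbernoulli
  simp only [Complex.ofReal_mul _ (periodizedBernoulli 2 _)]
  rw [fourierCoeff.const_mul, hbernoulli, mul_pow, mul_pow, mul_pow, Complex.I_sq]
  push_cast
  rcases eq_or_ne k 0 with rfl | hk
  · simp
  · have : (k : ℂ) ≠ 0 := Int.cast_ne_zero.2 hk
    field_simp
    norm_num [mul_comm]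

theorem mul_pairEnergy_periodizedBernoulli_two_le {ι : Type*} {F : C(UnitAddCircle, ℝ)} {c : ℝ}
    (hF : ∀ k : ℤ, k ≠ 0 → c / (k : ℂ) ^ 2 ≤ fourierCoeff (fun t => (F t : ℂ)) k)
    (s : Finset ι) (x : ι → UnitAddCircle) :
    2 * π ^ 2 * c * pairEnergy (periodizedBernoulli 2) s x ≤
      pairEnergy (fun t => F t - ∫ u, F u ∂haarAddCircle) s x := by
  let F₀ : C(UnitAddCircle, ℝ) := ⟨fun t => F t - ∫ u, F u ∂haarAddCircle, by fun_prop⟩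
  let B : C(UnitAddCircle, ℝ) := ⟨fun t => 2 * π ^ 2 * c * periodizedBernoulli 2 t,
    continuous_const.mul (periodizedBernoulli.continuous (by norm_num))⟩
  have hB : pairEnergy B s x = 2 * π ^ 2 * c * pairEnergy (periodizedBernoulli 2) s x := by
    simp only [pairEnergy, mul_sum, B, ContinuousMap.coe_mk]
  rw [← hB]
  refine pairEnergy_le_pairEnergy_of_fourierCoeff_le (G := F₀) (fun k => ?_) s x
  have hFint : Integrable F haarAddCircle :=
    F.continuous.integrable_of_hasCompactSupport (.of_compactSpace _)
  simp only [F₀, B, ContinuousMap.coe_mk]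
  rw [fourierCoeff_mul_periodizedBernoulli_two, fourierCoeff_sub_integral hFint]
  split_ifs with hk
  · simp [hk]
  · exact hF k hk

end Diaphony

section Greedy

theorem le_card_mul_integral_of_forall_le_sum {ι G : Type*} [AddGroup G] [MeasurableSpace G]
    [MeasurableAdd G] {μ : Measure G} [IsProbabilityMeasure μ] [μ.IsAddRightInvariant]
    {F : G → ℝ} (hF : Integrable F μ) {s : Finset ι} {x : ι → G} {m : ℝ}
    (hm : ∀ y, m ≤ ∑ i ∈ s, F (y - x i)) : m ≤ #s * ∫ t, F t ∂μ :=
  calc m = ∫ _, m ∂μ := by rw [integral_const, probReal_univ, one_smul]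
    _ ≤ ∫ y, ∑ i ∈ s, F (y - x i) ∂μ :=
        integral_mono (integrable_const m)
          (integrable_finsetSum _ fun i _ => hF.comp_sub_right (x i)) hm
    _ = #s * ∫ t, F t ∂μ := by
        rw [integral_finsetSum _ fun i _ => hF.comp_sub_right (x i)]
        simp only [integral_sub_right_eq_self, sum_const, nsmul_eq_mul]

theorem sum_range_sum_range_le_of_row_sum_nonpos {K : ℕ → ℕ → ℝ} {B : ℝ} {s : ℕ}
    (hsymm : ∀ m n, K m n = K n m) (hB : ∀ m n, |K m n| ≤ B)
    (hrow : ∀ N, s ≤ N → ∑ n ∈ range N, K N n ≤ 0) (N : ℕ) :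
    ∑ m ∈ range N, ∑ n ∈ range N, K m n ≤ (2 * s + 1) * B * N := by
  have hB_nonneg : 0 ≤ B := (abs_nonneg _).trans (hB 0 0)
  have hrow_le (N : ℕ) : ∑ n ∈ range N, K N n ≤ s * B := by
    rcases le_total s N with hN | hN
    · exact (hrow N hN).trans (by positivity)
    · calc ∑ n ∈ range N, K N n ≤ #(range N) • B :=
            sum_le_card_nsmul _ _ _ fun n _ => (le_abs_self _).trans (hB N n)
        _ ≤ s * B := by rw [card_range, nsmul_eq_mul]; gcongr
  induction N with
  | zero => simp
  | succ N ih =>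
    simp_rw [sum_range_succ, sum_add_distrib, hsymm _ N]
    push_cast
    linarith [hrow_le N, (le_abs_self _).trans (hB N N)]

/-- The sequence `x` is greedy for the interaction `F` from index `s` on: each `x N` with `s ≤ N`
minimises the potential `y ↦ ∑ k < N, F (y - x k)` of the preceding points. The seed
`x 0, …, x (s - 1)` is arbitrary. -/
def IsGreedyFrom {G : Type*} [Sub G] (F : G → ℝ) (s : ℕ) (x : ℕ → G) : Prop :=
  ∀ N, s ≤ N → ∀ y, ∑ k ∈ range N, F (x N - x k) ≤ ∑ k ∈ range N, F (y - x k)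

theorem IsGreedyFrom.pairEnergy_sub_integral_le {G : Type*} [AddGroup G] [MeasurableSpace G]
    [MeasurableAdd G] {μ : Measure G} [IsProbabilityMeasure μ] [μ.IsAddRightInvariant]
    {F : G → ℝ} {s : ℕ} {x : ℕ → G} (hx : IsGreedyFrom F s x) (hF : Integrable F μ)
    (heven : ∀ t, F (-t) = F t) {B : ℝ} (hB : ∀ t, |F t - ∫ u, F u ∂μ| ≤ B) (N : ℕ) :
    pairEnergy (fun t => F t - ∫ u, F u ∂μ) (range N) x ≤ (2 * s + 1) * B * N := by
  refine sum_range_sum_range_le_of_row_sum_nonpos (fun m n => ?_) (fun _ _ => hB _)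
    (fun N hN => ?_) N
  · rw [← heven, neg_sub]
  · rw [sum_sub_distrib, sum_const, nsmul_eq_mul, sub_nonpos]
    exact le_card_mul_integral_of_forall_le_sum hF (hx N hN)

theorem IsGreedyFrom.exists_disc_le {F : C(UnitAddCircle, ℝ)} {s : ℕ} {x : ℕ → ℝ}
    (hgreedy : IsGreedyFrom F s fun n => (x n : UnitAddCircle))
    (hx : ∀ n, x n ∈ Set.Ico (0 : ℝ) 1) (heven : ∀ t, F (-t) = F t) {c : ℝ} (hc : 0 < c)
    (hF : ∀ k : ℤ, k ≠ 0 → c / (k : ℂ) ^ 2 ≤ fourierCoeff (fun t => (F t : ℂ)) k) :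
    ∃ C : ℝ, 0 < C ∧ ∀ N : ℕ, 1 ≤ N → disc N x ≤ C / (N : ℝ) ^ ((1 : ℝ) / 3) := by
  have hFint : Integrable F haarAddCircle :=
    F.continuous.integrable_of_hasCompactSupport (.of_compactSpace _)
  set B : ℝ := ‖F - .const _ (∫ u, F u ∂haarAddCircle)‖
  have hB (t : UnitAddCircle) : |F t - ∫ u, F u ∂haarAddCircle| ≤ B :=
    (F - .const _ (∫ u, F u ∂haarAddCircle)).norm_coe_le_norm t
  set K : ℝ := (2 * s + 1) * B / (2 * π ^ 2 * c) + 1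
  have henergy (N : ℕ) :
      pairEnergy (periodizedBernoulli 2) (range N) (fun n => (x n : UnitAddCircle)) ≤ K * N := by
    have h := (mul_pairEnergy_periodizedBernoulli_two_le hF (range N) _).trans
      (hgreedy.pairEnergy_sub_integral_le hFint heven hB N)
    rw [← le_div_iff₀' (by positivity), mul_div_right_comm] at h
    exact h.trans (by gcongr; exact le_add_of_nonneg_right zero_le_one)
  refine ⟨(6 * K) ^ (1 / 3 : ℝ), by positivity, fun N hN => ?_⟩
  calc disc N x
      ≤ (6 / N ^ 2 * pairEnergy (periodizedBernoulli 2) (range N)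
          fun n => (x n : UnitAddCircle)) ^ (1 / 3 : ℝ) :=
        disc_le_rpow_pairEnergy hN fun n _ => hx n
    _ ≤ (6 / N ^ 2 * (K * N)) ^ (1 / 3 : ℝ) := by
        gcongr
        · exact mul_nonneg (by positivity) (pairEnergy_periodizedBernoulli_two_nonneg _ _)
        · exact henergy N
    _ = (6 * K / N) ^ (1 / 3 : ℝ) := by congr 1; field_simp
    _ = (6 * K) ^ (1 / 3 : ℝ) / N ^ (1 / 3 : ℝ) := Real.div_rpow (by positivity) (by positivity) _

end Greedy

section Lift

variable {f : ℝ → ℝ}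

theorem fourierCoeff_liftIco_one (f : ℝ → ℝ) (k : ℤ) :
    fourierCoeff (fun t : UnitAddCircle => ((liftIco 1 0 f t : ℝ) : ℂ)) k =
      ∫ t in (0 : ℝ)..1, (f t : ℂ) * Complex.exp (-(2 * π * Complex.I * k * t)) := by
  rw [fourierCoeff_eq_intervalIntegral _ _ 0, div_one, one_smul, zero_add]
  refine intervalIntegral.integral_congr_Ioo_of_le zero_le_one fun t ht => ?_
  rw [liftIco_zero_coe_apply ⟨ht.1.le, ht.2⟩, fourier_coe_apply, smul_eq_mul, mul_comm]
  congr 2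
  push_cast
  ring

theorem liftIco_one_neg (hsym : ∀ x ∈ Set.Icc (0 : ℝ) 1, f x = f (1 - x)) (t : UnitAddCircle) :
    liftIco 1 0 f (-t) = liftIco 1 0 f t := by
  induction t using QuotientAddGroup.induction_on with
  | H y =>
    rw [← AddCircle.coe_neg, liftIco_one_coe, liftIco_one_coe]
    rcases eq_or_ne (Int.fract y) 0 with hy | hy
    · rw [hy, Int.fract_neg_eq_zero.2 hy]
    · rw [Int.fract_neg hy, ← hsym _ ⟨Int.fract_nonneg y, (Int.fract_lt_one y).le⟩]

theorem isGreedyFrom_liftIco_one {s : ℕ} {x : ℕ → ℝ}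
    (hgreedy : ∀ N, s ≤ N → ∀ y ∈ Set.Ico (0 : ℝ) 1,
      ∑ k ∈ range N, f (Int.fract (x N - x k)) ≤ ∑ k ∈ range N, f (Int.fract (y - x k))) :
    IsGreedyFrom (liftIco 1 0 f) s fun n => (x n : UnitAddCircle) := by
  intro N hN t
  induction t using QuotientAddGroup.induction_on with
  | H y =>
    rw [← coe_fract]
    simp only [← AddCircle.coe_sub, liftIco_one_coe]
    exact hgreedy N hN _ ⟨Int.fract_nonneg y, Int.fract_lt_one y⟩

end Lift

theorem greedy_discrepancy_bound_general (f : ℝ → ℝ)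
    (hcont : ContinuousOn f (Set.Icc (0 : ℝ) 1))
    (hsym : ∀ x ∈ Set.Icc (0 : ℝ) 1, f x = f (1 - x))
    (c : ℝ) (hc : 0 < c)
    (hfourier : ∀ k : ℤ, k ≠ 0 →
      (c / (k : ℂ) ^ 2 : ℂ)
        ≤ ∫ t in (0 : ℝ)..1, (f t : ℂ) * Complex.exp (-(2 * π * Complex.I * k * t)))
    (s : ℕ) (x : ℕ → ℝ) (hx : ∀ n, x n ∈ Set.Ico (0 : ℝ) 1)
    (hgreedy : ∀ N, s ≤ N → ∀ y ∈ Set.Ico (0 : ℝ) 1,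
      ∑ k ∈ Finset.range N, f (Int.fract (x N - x k))
        ≤ ∑ k ∈ Finset.range N, f (Int.fract (y - x k))) :
    ∃ C : ℝ, 0 < C ∧ ∀ N : ℕ, 1 ≤ N →
      disc N x ≤ C / (N : ℝ) ^ ((1 : ℝ) / 3) := by
  have hends : f 0 = f 1 := by simpa using hsym 0 (by simp)
  let F : C(UnitAddCircle, ℝ) :=
    ⟨liftIco 1 0 f, liftIco_zero_continuous hends (by simpa using hcont)⟩
  have hF : IsGreedyFrom F s fun n => (x n : UnitAddCircle) := isGreedyFrom_liftIco_one hgreedy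
  exact hF.exists_disc_le hx (liftIco_one_neg hsym) hc fun k hk =>
    (hfourier k hk).trans_eq (fourierCoeff_liftIco_one f k).symm

theorem greedy_discrepancy_bound (f : ℝ → ℝ)
    (hbdd : ∃ C : ℝ, ∀ x ∈ Set.Icc (0 : ℝ) 1, |f x| ≤ C)
    (hcont : ContinuousOn f (Set.Icc (0 : ℝ) 1))
    (hmean : ∫ x in (0 : ℝ)..1, f x = 0)
    (hsym : ∀ x ∈ Set.Icc (0 : ℝ) 1, f x = f (1 - x))
    (c : ℝ) (hc : 0 < c)
    (hfourier : ∀ k : ℤ, k ≠ 0 →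
      (c / (k : ℂ) ^ 2 : ℂ)
        ≤ ∫ t in (0 : ℝ)..1, (f t : ℂ) * Complex.exp (-(2 * π * Complex.I * k * t)))
    (s : ℕ) (hs : 1 ≤ s) (x : ℕ → ℝ) (hx : ∀ n, x n ∈ Set.Ico (0 : ℝ) 1)
    (hgreedy : ∀ N, s ≤ N → ∀ y ∈ Set.Ico (0 : ℝ) 1,
      ∑ k ∈ Finset.range N, f (Int.fract (x N - x k))
        ≤ ∑ k ∈ Finset.range N, f (Int.fract (y - x k))) :
    ∃ C : ℝ, 0 < C ∧ ∀ N : ℕ, 1 ≤ N →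
      disc N x ≤ C / (N : ℝ) ^ ((1 : ℝ) / 3) :=
  greedy_discrepancy_bound_general f hcont hsym c hc hfourier s x hx hgreedy
end
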